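/- Let 0 < Y < 2, B > 0, A ∈ ℝ, and define for y > 0 the function ν₁(y) = (B/√(2π)) · e^{-(B²−A²)y/2} · y^{−(Y+1)/2} · ∫_0^∞ e^{−B²yh/2} h^{(Y−1)/2} (1+h)^{−Y/2} dh. Then for every real x ≠ 0, ∫_0^∞ ν₁(y) · (2πy)^{−1/2} e^{−(x−Ay)²/(2y)} dy = (2^{Y/2} Γ((Y+1)/2)/√π) · e^{Ax − B|x|} · |x|^{−(1+Y)}. (That is, the CGMY Lévy density is the Gaussian mixture, with drift A, of the explicit subordinator Lévy density ν₁, which is absolutely continuous with respect to the Lévy density of the one-sided stable Y/2 subordinator.) -/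

import Mathlib

open MeasureTheory Real Set

theorem image_mul_sqrt_sub_div_sqrt_Ioi {p q : ℝ} (hp : 0 < p) (hq : 0 < q) :
    (fun u : ℝ => p * √u - q / √u) '' Ioi 0 = univ := by
  refine eq_univ_of_forall fun v => ?_
  have hpq : 0 < p * q := mul_pos hp hq
  set r := √(v ^ 2 + 4 * (p * q)) with hr
  have hr2 : r ^ 2 = v ^ 2 + 4 * (p * q) := sq_sqrt (by positivity)
  have hr0 : |v| < r := by
    rw [hr, ← sqrt_sq_eq_abs]; exact sqrt_lt_sqrt (sq_nonneg v) (by linarith)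
  have hs : 0 < (v + r) / (2 * p) := div_pos (by linarith [neg_abs_le v]) (by positivity)
  refine ⟨((v + r) / (2 * p)) ^ 2, mem_Ioi.2 (by positivity), ?_⟩
  have hvr : v + r ≠ 0 := by linarith [neg_abs_le v]
  simp only [sqrt_sq hs.le]
  field_simp
  nlinarith

theorem injOn_mul_sqrt_sub_div_sqrt_Ioi {p q : ℝ} (hp : 0 < p) (hq : 0 < q) :
    InjOn (fun u : ℝ => p * √u - q / √u) (Ioi 0) := by
  refine StrictMonoOn.injOn fun u hu v hv huv => ?_
  have hu' := sqrt_pos.2 (mem_Ioi.1 hu)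
  have hs : √u < √v := sqrt_lt_sqrt (mem_Ioi.1 hu).le huv
  have h1 := mul_lt_mul_of_pos_left hs hp
  have h2 := div_lt_div_of_pos_left hq hu' hs
  linarith

theorem hasDerivAt_mul_sqrt_sub_div_sqrt (p q : ℝ) {u : ℝ} (hu : 0 < u) :
    HasDerivAt (fun u : ℝ => p * √u - q / √u) ((p / √u + q / (u * √u)) / 2) u := by
  have hs := sqrt_pos.2 hu
  have h := hasDerivAt_sqrt hu.ne'
  refine ((h.const_mul p).sub ((hasDerivAt_const u q).div h hs.ne')).congr_deriv ?_
  have := sq_sqrt hu.le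
  field_simp
  rw [this]
  ring

/-- The Cauchy–Schlömilch evaluation, in the form of the Laplace transform of an inverse
Gaussian type density. -/
theorem integrableOn_and_integral_inv_sqrt_mul_exp {p q : ℝ} (hp : 0 < p) (hq : 0 < q) :
    IntegrableOn (fun u : ℝ => (√u)⁻¹ * exp (-(p * √u - q / √u) ^ 2)) (Ioi 0) ∧
      ∫ u in Ioi (0 : ℝ), (√u)⁻¹ * exp (-(p * √u - q / √u) ^ 2) = √π / p := by
  set E : ℝ → ℝ := fun u => exp (-(p * √u - q / √u) ^ 2) with hE
  have hd : ∀ u ∈ Ioi (0 : ℝ), HasDerivWithinAt (fun u : ℝ => p * √u - q / √u)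
      ((p / √u + q / (u * √u)) / 2) (Ioi 0) u :=
    fun u hu => (hasDerivAt_mul_sqrt_sub_div_sqrt p q hu).hasDerivWithinAt
  have hinj := injOn_mul_sqrt_sub_div_sqrt_Ioi hp hq
  have hcongr : ∀ u ∈ Ioi (0 : ℝ), |(p / √u + q / (u * √u)) / 2| •
      exp (-(p * √u - q / √u) ^ 2) = (p / √u + q / (u * √u)) / 2 * E u := fun u hu => by
    have hu : 0 < u := hu
    rw [abs_of_pos (by positivity), smul_eq_mul]
  have hsum_int : IntegrableOn (fun u => (p / √u + q / (u * √u)) / 2 * E u) (Ioi 0) := by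
    have h := integrableOn_image_iff_integrableOn_abs_deriv_smul measurableSet_Ioi hd hinj
      (fun v => exp (-v ^ 2))
    rw [image_mul_sqrt_sub_div_sqrt_Ioi hp hq, integrableOn_univ] at h
    refine (integrableOn_congr_fun hcongr measurableSet_Ioi).1 (h.1 ?_)
    simpa using integrable_exp_neg_mul_sq one_pos
  have hsum : ∫ u in Ioi (0 : ℝ), (p / √u + q / (u * √u)) / 2 * E u = √π := by
    have h := integral_image_eq_integral_abs_deriv_smul measurableSet_Ioi hd hinj
      (fun v => exp (-v ^ 2))
    rw [image_mul_sqrt_sub_div_sqrt_Ioi hp hq, Measure.restrict_univ,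
      setIntegral_congr_fun measurableSet_Ioi hcongr] at h
    rw [← h]
    simpa using integral_gaussian 1
  have hEm : Measurable E := by fun_prop
  have hint1 : IntegrableOn (fun u => p / √u * E u) (Ioi 0) := by
    refine (hsum_int.const_mul 2).mono' (by fun_prop) ?_
    refine (ae_restrict_iff' measurableSet_Ioi).2 (ae_of_all _ fun u (hu : 0 < u) => ?_)
    have hE0 : 0 < E u := exp_pos _
    have h2 : 0 < q / (u * √u) * E u := by positivity
    rw [norm_of_nonneg (by positivity)]
    linarith
  have hint2 : IntegrableOn (fun u => q / (u * √u) * E u) (Ioi 0) := by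
    refine IntegrableOn.congr_fun ((hsum_int.const_mul 2).sub hint1) (fun u _ => ?_) measurableSet_Ioi
    simp only [Pi.sub_apply]
    ring
  have hflip : ∫ u in Ioi (0 : ℝ), p / √u * E u = ∫ u in Ioi (0 : ℝ), q / (u * √u) * E u := by
    have hk : 0 < (q / p) ^ 2 := by positivity
    have himg : (fun u : ℝ => (q / p) ^ 2 / u) '' Ioi 0 = Ioi 0 := by
      ext v
      simp only [mem_image, mem_Ioi]
      refine ⟨?_, fun hv => ⟨(q / p) ^ 2 / v, by positivity, by field_simp⟩⟩
      rintro ⟨u, hu, rfl⟩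
      positivity
    have h := integral_image_eq_integral_abs_deriv_smul measurableSet_Ioi
      (f := fun u : ℝ => (q / p) ^ 2 / u) (f' := fun u => -((q / p) ^ 2) / u ^ 2)
      (fun u hu => by
        have h := (hasDerivAt_const u ((q / p) ^ 2)).div (hasDerivAt_id u) (ne_of_gt hu)
        exact (h.congr_deriv (by simp)).hasDerivWithinAt)
      (fun u hu v hv huv => by
        have hu : 0 < u := hu
        have hv : 0 < v := hv
        have : (q / p) ^ 2 ≠ 0 := hk.ne'
        simp only at huv
        rw [div_eq_div_iff hu.ne' hv.ne'] at huv
        exact (mul_left_cancel₀ this huv).symm)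
      (fun u => p / √u * E u)
    rw [himg] at h
    rw [h]
    refine setIntegral_congr_fun measurableSet_Ioi fun u (hu : 0 < u) => ?_
    have hs := sqrt_pos.2 hu
    have hroot : √((q / p) ^ 2 / u) = q / p / √u := by
      rw [sqrt_div hk.le, sqrt_sq (by positivity)]
    have hEu : E ((q / p) ^ 2 / u) = E u := by
      simp only [hE, hroot]
      congr 2
      field_simp
      ring
    simp only [hEu, smul_eq_mul]
    rw [hroot, abs_div, abs_neg, abs_of_pos hk, abs_of_pos (by positivity : 0 < u ^ 2)]
    have : u ^ 2 = u * √u * √u := by rw [mul_assoc, mul_self_sqrt hu.le]; ring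
    rw [this]
    field_simp
  have hcoef : ∀ u : ℝ, (√u)⁻¹ * E u = p⁻¹ * (p / √u * E u) := fun u => by
    field_simp
  have hval : ∫ u in Ioi (0 : ℝ), p / √u * E u = √π := by
    have h : ∫ u in Ioi (0 : ℝ), (p / √u + q / (u * √u)) / 2 * E u =
        2⁻¹ * ((∫ u in Ioi (0 : ℝ), p / √u * E u) + ∫ u in Ioi (0 : ℝ), q / (u * √u) * E u) := by
      rw [← integral_add hint1 hint2, ← integral_const_mul]
      congr 1 with u
      ring
    rw [← hflip, hsum] at h
    linarith
  refine ⟨?_, ?_⟩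
  · exact (hint1.const_mul p⁻¹).congr (ae_of_all _ fun u => (hcoef u).symm)
  · rw [integral_congr_ae (ae_of_all _ hcoef), integral_const_mul, hval]
    ring

theorem integral_integral_comp_one_add_mul {K : ℝ → ℝ → ℝ} (hm : Measurable (Function.uncurry K))
    (hK : Integrable (Function.uncurry K)
      ((volume.restrict (Ioi (0 : ℝ))).prod (volume.restrict (Ioi (0 : ℝ))))) :
    ∫ y in Ioi (0 : ℝ), ∫ h in Ioi (0 : ℝ), (1 + h) * K ((1 + h) * y) h =
      ∫ u in Ioi (0 : ℝ), ∫ h in Ioi (0 : ℝ), K u h := by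
  have hscale : ∀ g : ℝ → ℝ, ∀ h ∈ Ioi (0 : ℝ),
      ∫ y in Ioi (0 : ℝ), (1 + h) * g ((1 + h) * y) = ∫ u in Ioi (0 : ℝ), g u := by
    intro g h hh
    have h1 : 0 < 1 + h := by linarith [mem_Ioi.1 hh]
    rw [integral_const_mul, integral_comp_mul_left_Ioi g 0 h1, mul_zero, smul_eq_mul,
      mul_inv_cancel_left₀ h1.ne']
  have hm' : Measurable (fun z : ℝ × ℝ => (1 + z.2) * K ((1 + z.2) * z.1) z.2) :=
    (measurable_snd.const_add 1).mul
      (hm.comp (((measurable_snd.const_add 1).mul measurable_fst).prodMk measurable_snd))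
  have hK' := (integrable_prod_iff' hK.aestronglyMeasurable).1 hK
  rw [integral_integral_swap, integral_integral_swap hK]
  · exact setIntegral_congr_fun measurableSet_Ioi fun h hh => hscale (fun u => K u h) h hh
  · refine (integrable_prod_iff' hm'.aestronglyMeasurable).2 ⟨?_, ?_⟩
    · filter_upwards [hK'.1, self_mem_ae_restrict measurableSet_Ioi] with h hi hh
      have h1 : 0 < 1 + h := by linarith [mem_Ioi.1 hh]
      refine Integrable.const_mul (c := 1 + h) ?_
      have := (integrableOn_Ioi_comp_mul_left_iff (fun u => K u h) 0 h1).2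
      rw [mul_zero] at this
      exact this hi
    · refine hK'.2.congr ?_
      filter_upwards [self_mem_ae_restrict measurableSet_Ioi] with h hh
      have h1 : 0 < 1 + h := by linarith [mem_Ioi.1 hh]
      simp only [Function.uncurry_apply_pair, norm_mul]
      rw [norm_of_nonneg h1.le]
      exact (hscale (fun u => ‖K u h‖) h hh).symm

theorem integrableOn_rpow_mul_exp_neg_mul_Ioi {a r : ℝ} (ha : 0 < a) (hr : 0 < r) :
    IntegrableOn (fun t : ℝ => t ^ (a - 1) * exp (-(r * t))) (Ioi 0) := by
  refine .of_integral_ne_zero ?_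
  rw [integral_rpow_mul_exp_neg_mul_Ioi ha hr]
  have := Gamma_pos_of_pos ha
  positivity

/-- The joint density in `(u, h)` obtained from the mixture after the substitution
`u = (1 + h) y`. -/
noncomputable def mixtureKernel (Y B x u h : ℝ) : ℝ :=
  u ^ (-(Y / 2 + 1)) * exp (-(B ^ 2 * u / 2) - x ^ 2 / (2 * u)) *
    (h ^ ((Y + 1) / 2 - 1) * exp (-(x ^ 2 / (2 * u) * h)))

theorem measurable_mixtureKernel (Y B x : ℝ) :
    Measurable (Function.uncurry (mixtureKernel Y B x)) := by
  unfold mixtureKernel Function.uncurry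
  fun_prop

theorem mixtureKernel_nonneg (Y B x : ℝ) {u h : ℝ} (hu : 0 < u) (hh : 0 < h) :
    0 ≤ mixtureKernel Y B x u h := by
  unfold mixtureKernel
  positivity

theorem integral_mixtureKernel {Y B x u : ℝ} (hY : 0 < Y) (hx : x ≠ 0) (hu : 0 < u) :
    ∫ h in Ioi (0 : ℝ), mixtureKernel Y B x u h =
      2 ^ ((Y + 1) / 2) * |x| ^ (-(1 + Y)) * Gamma ((Y + 1) / 2) * exp (-(B * |x|)) *
        ((√u)⁻¹ * exp (-(B / √2 * √u - |x| / √2 / √u) ^ 2)) := by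
  have hx' : 0 < |x| := abs_pos.2 hx
  have hxx : x ^ 2 = |x| ^ 2 := (sq_abs x).symm
  unfold mixtureKernel
  rw [hxx]
  generalize |x| = z at hx'
  rw [integral_const_mul, integral_rpow_mul_exp_neg_mul_Ioi (by linarith) (by positivity)]
  have hs := sqrt_pos.2 hu
  have hexp : exp (-(B ^ 2 * u / 2) - z ^ 2 / (2 * u)) =
      exp (-(B * z)) * exp (-(B / √2 * √u - z / √2 / √u) ^ 2) := by
    rw [← exp_add]
    congr 1
    have h2 : √2 ^ 2 = (2 : ℝ) := sq_sqrt zero_le_two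
    have : (B / √2 * √u - z / √2 / √u) ^ 2 = B ^ 2 * √u ^ 2 / √2 ^ 2 - 2 * B * z / √2 ^ 2 +
        z ^ 2 / (√2 ^ 2 * √u ^ 2) := by
      field_simp
      ring
    rw [this, h2, sq_sqrt hu.le]
    ring
  have hpow : (1 / (z ^ 2 / (2 * u))) ^ ((Y + 1) / 2) =
      2 ^ ((Y + 1) / 2) * z ^ (-(1 + Y)) * u ^ ((Y + 1) / 2) := by
    rw [one_div_div, div_rpow (by positivity) (by positivity), mul_rpow zero_le_two hu.le,
      ← rpow_natCast z 2, ← rpow_mul hx'.le, rpow_neg hx'.le]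
    rw [show ((2 : ℕ) : ℝ) * ((Y + 1) / 2) = 1 + Y by push_cast; ring]
    ring
  have hu2 : u ^ (-(Y / 2 + 1)) * u ^ ((Y + 1) / 2) = (√u)⁻¹ := by
    rw [← rpow_add hu, sqrt_eq_rpow, ← rpow_neg hu.le]
    ring_nf
  rw [hexp, hpow, ← hu2]
  ring

theorem integrableOn_mixtureKernel {Y B x u : ℝ} (hY : 0 < Y) (hx : x ≠ 0) (hu : 0 < u) :
    IntegrableOn (mixtureKernel Y B x u) (Ioi 0) :=
  (integrableOn_rpow_mul_exp_neg_mul_Ioi (by linarith) (by positivity)).const_mul _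

theorem integrable_prod_mixtureKernel {Y B x : ℝ} (hY : 0 < Y) (hB : 0 < B) (hx : x ≠ 0) :
    Integrable (Function.uncurry (mixtureKernel Y B x))
      ((volume.restrict (Ioi (0 : ℝ))).prod (volume.restrict (Ioi (0 : ℝ)))) := by
  refine (integrable_prod_iff (measurable_mixtureKernel Y B x).aestronglyMeasurable).2 ⟨?_, ?_⟩
  · filter_upwards [self_mem_ae_restrict measurableSet_Ioi] with u hu
    exact integrableOn_mixtureKernel hY hx hu
  · have hx' : 0 < |x| := abs_pos.2 hx
    have h := (integrableOn_and_integral_inv_sqrt_mul_exp (p := B / √2) (q := |x| / √2)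
      (by positivity) (by positivity)).1
    refine IntegrableOn.congr_fun (h.const_mul (2 ^ ((Y + 1) / 2) * |x| ^ (-(1 + Y)) *
      Gamma ((Y + 1) / 2) * exp (-(B * |x|)))) (fun u hu => ?_) measurableSet_Ioi
    rw [← integral_mixtureKernel hY hx hu]
    exact setIntegral_congr_fun measurableSet_Ioi fun h hh =>
      (norm_of_nonneg (mixtureKernel_nonneg Y B x hu hh)).symm

theorem integral_integral_mixtureKernel {Y B x : ℝ} (hY : 0 < Y) (hB : 0 < B) (hx : x ≠ 0) :
    ∫ u in Ioi (0 : ℝ), ∫ h in Ioi (0 : ℝ), mixtureKernel Y B x u h =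
      2 ^ ((Y + 1) / 2) * |x| ^ (-(1 + Y)) * Gamma ((Y + 1) / 2) * exp (-(B * |x|)) *
        (√π / (B / √2)) := by
  have hx' : 0 < |x| := abs_pos.2 hx
  rw [setIntegral_congr_fun measurableSet_Ioi fun u hu => integral_mixtureKernel hY hx hu,
    integral_const_mul, (integrableOn_and_integral_inv_sqrt_mul_exp (p := B / √2) (q := |x| / √2)
      (by positivity) (by positivity)).2]

/-- The integrand of the mixture is a rescaled `mixtureKernel`. -/
theorem mixture_integrand_eq (Y B A x : ℝ) {y h : ℝ} (hy : 0 < y) (hh : 0 < h) :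
    (B / √(2 * π)) * exp (-((B ^ 2 - A ^ 2) * y / 2)) * y ^ (-((Y + 1) / 2)) *
        (exp (-(B ^ 2 * y * h / 2)) * h ^ ((Y - 1) / 2) * (1 + h) ^ (-(Y / 2))) *
        ((2 * π * y) ^ (-(1 / 2 : ℝ)) * exp (-(x - A * y) ^ 2 / (2 * y))) =
      B / (2 * π) * exp (A * x) * ((1 + h) * mixtureKernel Y B x ((1 + h) * y) h) := by
  have h1 : 0 < 1 + h := by linarith
  have h2π : 0 < 2 * π := by positivity
  unfold mixtureKernel
  have hexp : exp (-((B ^ 2 - A ^ 2) * y / 2)) * exp (-(B ^ 2 * y * h / 2)) *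
      exp (-(x - A * y) ^ 2 / (2 * y)) =
      exp (A * x) * exp (-(B ^ 2 * ((1 + h) * y) / 2) - x ^ 2 / (2 * ((1 + h) * y))) *
        exp (-(x ^ 2 / (2 * ((1 + h) * y)) * h)) := by
    simp only [← exp_add]
    congr 1
    field_simp
    ring
  have hy2 : y ^ (-((Y + 1) / 2)) * y ^ (-(1 / 2 : ℝ)) = y ^ (-(Y / 2 + 1)) := by
    rw [← rpow_add hy]
    ring_nf
  have hh2 : (1 + h) ^ (-(Y / 2)) = (1 + h) * (1 + h) ^ (-(Y / 2 + 1)) := by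
    nth_rewrite 2 [← rpow_one (1 + h)]
    rw [← rpow_add h1]
    ring_nf
  have hπ : (2 * π) ^ (-(1 / 2 : ℝ)) / √(2 * π) = 1 / (2 * π) := by
    rw [rpow_neg h2π.le, ← sqrt_eq_rpow, div_eq_mul_inv, ← mul_inv, mul_self_sqrt h2π.le, one_div]
  rw [mul_rpow h2π.le hy.le, mul_rpow h1.le hy.le, hh2, ← hy2,
    show (Y + 1) / 2 - 1 = (Y - 1) / 2 by ring]
  calc _ = B * ((2 * π) ^ (-(1 / 2 : ℝ)) / √(2 * π)) * (exp (-((B ^ 2 - A ^ 2) * y / 2)) *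
        exp (-(B ^ 2 * y * h / 2)) * exp (-(x - A * y) ^ 2 / (2 * y))) *
        (y ^ (-((Y + 1) / 2)) * y ^ (-(1 / 2 : ℝ)) * h ^ ((Y - 1) / 2) *
          ((1 + h) * (1 + h) ^ (-(Y / 2 + 1)))) := by ring
    _ = _ := by rw [hπ, hexp]; ring


/-- The CGMY Lévy density (with `C = 2^(Y/2) Γ((Y+1)/2)/√π`, `G = B + A`, `M = B - A`)
is the Gaussian mixture, with drift `A`, of the explicit subordinator Lévy density
`ν₁(y) = (B/√(2π)) e^{-(B²-A²)y/2} y^{-(Y+1)/2} ∫_0^∞ e^{-B²yh/2} h^{(Y-1)/2} (1+h)^{-Y/2} dh`,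
which is absolutely continuous with respect to the Lévy density of the one-sided stable
`Y/2` subordinator. -/
theorem cgmy_levy_density_as_gaussian_mixture (Y B A : ℝ) (hY0 : 0 < Y) (hY2 : Y < 2)
    (hB : 0 < B) (x : ℝ) (hx : x ≠ 0) :
    ∫ y in Ioi (0:ℝ),
        ((B / Real.sqrt (2 * π)) * Real.exp (-((B^2 - A^2) * y / 2)) * y ^ (-((Y+1)/2)) *
          ∫ h in Ioi (0:ℝ), Real.exp (-(B^2 * y * h / 2)) * h ^ ((Y-1)/2) * (1+h) ^ (-(Y/2))) *
        ((2 * π * y) ^ (-(1/2 : ℝ)) * Real.exp (-(x - A*y)^2 / (2*y))) =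
      (2 ^ (Y/2) * Real.Gamma ((Y+1)/2) / Real.sqrt π) *
        Real.exp (A*x - B*|x|) * |x| ^ (-(1+Y)) := by
  have hinner : ∀ y ∈ Ioi (0 : ℝ),
      ((B / Real.sqrt (2 * π)) * Real.exp (-((B^2 - A^2) * y / 2)) * y ^ (-((Y+1)/2)) *
          ∫ h in Ioi (0:ℝ), Real.exp (-(B^2 * y * h / 2)) * h ^ ((Y-1)/2) * (1+h) ^ (-(Y/2))) *
        ((2 * π * y) ^ (-(1/2 : ℝ)) * Real.exp (-(x - A*y)^2 / (2*y))) =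
      B / (2 * π) * exp (A * x) *
        ∫ h in Ioi (0 : ℝ), (1 + h) * mixtureKernel Y B x ((1 + h) * y) h := by
    intro y hy
    rw [← integral_const_mul, ← integral_mul_const, ← integral_const_mul]
    exact setIntegral_congr_fun measurableSet_Ioi fun h hh => mixture_integrand_eq Y B A x hy hh
  rw [setIntegral_congr_fun measurableSet_Ioi hinner, integral_const_mul,
    integral_integral_comp_one_add_mul (measurable_mixtureKernel Y B x)
      (integrable_prod_mixtureKernel hY0 hB hx),
    integral_integral_mixtureKernel hY0 hB hx, sub_eq_add_neg (A * x), exp_add]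
  have h2 : (2 : ℝ) ^ ((Y + 1) / 2) = 2 ^ (Y / 2) * √2 := by
    rw [sqrt_eq_rpow, ← rpow_add two_pos]
    ring_nf
  have hs2 : √2 ^ 2 = (2 : ℝ) := sq_sqrt zero_le_two
  have hsπ : √π ^ 2 = π := sq_sqrt pi_pos.le
  have hsπ0 : 0 < √π := sqrt_pos.2 pi_pos
  rw [h2]
  field_simp
  rw [hs2, hsπ]
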